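/- Let \Omega \subset \mathbb{C}^n be a bounded Reinhardt domain and f \in A^\infty(\Omega) with Laurent expansion f = \sum_{\alpha \in \mathbb{Z}^n} c_\alpha e_\alpha. Then for every k \in \mathbb{N}, \sum_{\alpha \in \mathbb{Z}^n} \|c_\alpha e_\alpha\|'_{k,\Omega} < \infty, i.e., the Laurent series converges absolutely in the Fréchet topology of A^\infty(\Omega). -/

import Mathlib

open Filter Topology

/-- The holomorphic partial derivative in the `j`-th coordinate direction. -/
noncomputable def pderivC {n : ℕ} (j : Fin n) (f : (Fin n → ℂ) → ℂ) : (Fin n → ℂ) → ℂ :=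
  fun z => fderiv ℂ f z (Pi.single j 1)

/-- The iterated holomorphic partial derivative `D^α f` of multi-order `α`. -/
noncomputable def Dmulti {n : ℕ} (α : Fin n → ℕ) (f : (Fin n → ℂ) → ℂ) : (Fin n → ℂ) → ℂ :=
  (List.finRange n).foldr (fun j g => (pderivC j)^[α j] g) f

/-- `Ω` is a Reinhardt set: invariant under unimodular rotations of the coordinates. -/
def IsReinhardt {n : ℕ} (Ω : Set (Fin n → ℂ)) : Prop :=
  ∀ z ∈ Ω, ∀ lam : Fin n → ℂ, (∀ j, ‖lam j‖ = 1) → (fun j => lam j * z j) ∈ Ω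

/-- The polyannulus determined by radii `r`, `R` and a choice, for each coordinate,
of annulus (`b j = true`) or disc (`b j = false`). -/
def polyann {n : ℕ} (r R : Fin n → ℝ) (b : Fin n → Bool) : Set (Fin n → ℂ) :=
  {z | ∀ j, if b j then r j < ‖z j‖ ∧ ‖z j‖ < R j else ‖z j‖ < R j}

/-- `f` is holomorphic on `Ω` and smooth up to the boundary: every iterated holomorphic
derivative of `f` is holomorphic on `Ω` and extends continuously to the closure. -/
def AInfinity {n : ℕ} (Ω : Set (Fin n → ℂ)) (f : (Fin n → ℂ) → ℂ) : Prop :=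
  DifferentiableOn ℂ f Ω ∧
    ∀ α : Fin n → ℕ, DifferentiableOn ℂ (Dmulti α f) Ω ∧
      ∃ g : (Fin n → ℂ) → ℂ, ContinuousOn g (closure Ω) ∧ Set.EqOn (Dmulti α f) g Ω

/-- The sup-seminorm `‖f‖_{k,Ω}` over derivatives of total order at most `k`. -/
noncomputable def snormTotal {n : ℕ} (k : ℕ) (Ω : Set (Fin n → ℂ))
    (f : (Fin n → ℂ) → ℂ) : ℝ :=
  sSup {x | ∃ α : Fin n → ℕ, ∃ z ∈ Ω, (∑ j, α j) ≤ k ∧ x = ‖Dmulti α f z‖}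

/-- The sup-seminorm `‖f‖'_{k,Ω}` over derivatives of order at most `k` in each variable. -/
noncomputable def snormMax {n : ℕ} (k : ℕ) (Ω : Set (Fin n → ℂ))
    (f : (Fin n → ℂ) → ℂ) : ℝ :=
  sSup {x | ∃ α : Fin n → ℕ, ∃ z ∈ Ω, (∀ j, α j ≤ k) ∧ x = ‖Dmulti α f z‖}

/-- `μ_ℓ`: `1/(ℓ(ℓ-1))` for `ℓ ≠ 0,1` and `1` for `ℓ ∈ {0,1}`. -/
noncomputable def mu (l : ℤ) : ℝ :=
  if l = 0 ∨ l = 1 then 1 else 1 / ((l : ℝ) * ((l : ℝ) - 1))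

section torusMeasure
open MeasureTheory

noncomputable local instance torusMS : MeasureSpace UnitAddCircle := ⟨AddCircle.haarAddCircle⟩

local instance torusHaar : Measure.IsAddHaarMeasure (volume : Measure UnitAddCircle) :=
  inferInstanceAs (Measure.IsAddHaarMeasure AddCircle.haarAddCircle)

local instance torusProb : IsProbabilityMeasure (volume : Measure UnitAddCircle) :=
  inferInstanceAs (IsProbabilityMeasure AddCircle.haarAddCircle)

theorem four_bd {n : ℕ} (b : (Fin n → ℤ) → ℂ) (hb : Summable b) (M : ℝ) (hM : 0 ≤ M)
    (h : ∀ x : UnitAddTorus (Fin n), ‖∑' α, b α * UnitAddTorus.mFourier α x‖ ≤ M)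
    (α0 : Fin n → ℤ) : ‖b α0‖ ≤ M := by
  have hs : Summable (fun α => b α • (UnitAddTorus.mFourier α : C(UnitAddTorus (Fin n), ℂ))) := by
    apply Summable.of_norm
    simpa [norm_smul, UnitAddTorus.mFourier_norm] using hb.norm
  obtain ⟨F, hF⟩ := hs
  have hFM : ‖F‖ ≤ M := by
    rw [ContinuousMap.norm_le _ hM]
    intro x
    have := hF.map (ContinuousMap.evalCLM ℂ x : C(UnitAddTorus (Fin n), ℂ) →L[ℂ] ℂ)
      (ContinuousLinearMap.continuous _)
    have h2 := this.tsum_eq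
    simp only [Function.comp_def, ContinuousMap.evalCLM_apply, ContinuousMap.smul_apply,
      smul_eq_mul] at h2
    rw [← h2]; exact h x
  let T : C(UnitAddTorus (Fin n), ℂ) →L[ℂ] Lp ℂ 2 (volume : Measure (UnitAddTorus (Fin n))) :=
    ContinuousMap.toLp (E := ℂ) 2 volume ℂ
  let L := (innerSL ℂ (UnitAddTorus.mFourierLp 2 α0)).comp T
  have hL := hF.map L L.continuous
  have horth := orthonormal_iff_ite.mp (UnitAddTorus.orthonormal_mFourier (d := Fin n))
  have hL2 : HasSum (fun α => if α = α0 then b α0 else 0) (L F) := by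
    convert hL using 1
    ext α
    simp only [Function.comp_def, map_smul, smul_eq_mul]
    have : L (UnitAddTorus.mFourier α) = if α0 = α then 1 else 0 := horth α0 α
    rw [this]
    by_cases e : α = α0
    · simp [e]
    · simp [e, Ne.symm e]
  have hbL : b α0 = L F := (hasSum_ite_eq α0 (b α0)).unique hL2
  rw [hbL]
  have hT : ‖T‖ ≤ 1 := by
    refine (ContinuousMap.toLp_norm_le _).trans ?_
    simp [measureUnivNNReal]
  calc ‖L F‖ ≤ ‖UnitAddTorus.mFourierLp 2 α0‖ * ‖T F‖ :=
        norm_inner_le_norm (𝕜 := ℂ) (UnitAddTorus.mFourierLp 2 α0) (T F)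
    _ ≤ 1 * (1 * ‖F‖) := by
        gcongr
        · exact ((UnitAddTorus.orthonormal_mFourier (d := Fin n)).1 α0).le
        · exact (T.le_opNorm F).trans (by gcongr)
    _ ≤ M := by simpa using hFM

end torusMeasure
theorem Dmulti_zero {n : ℕ} (f : (Fin n → ℂ) → ℂ) : Dmulti 0 f = f := by
  unfold Dmulti
  induction List.finRange n with
  | nil => rfl
  | cons a l ih => simp [ih]

theorem Dmulti_step {n : ℕ} (β : Fin n → ℕ) (j : Fin n) (hβ : ∀ i < j, β i = 0)
    (f : (Fin n → ℂ) → ℂ) :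
    Dmulti (β + Pi.single j 1) f = pderivC j (Dmulti β f) := by
  unfold Dmulti
  have key : ∀ l : List (Fin n), l.Pairwise (· < ·) →
      (j ∉ l → l.foldr (fun i g => (pderivC i)^[(β + Pi.single j 1 : Fin n → ℕ) i] g) f =
        l.foldr (fun i g => (pderivC i)^[β i] g) f) ∧
      (j ∈ l → l.foldr (fun i g => (pderivC i)^[(β + Pi.single j 1 : Fin n → ℕ) i] g) f =
        pderivC j (l.foldr (fun i g => (pderivC i)^[β i] g) f)) := by
    intro l
    induction l with
    | nil => intro _; simp
    | cons a l ih =>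
      intro hp
      rw [List.pairwise_cons] at hp
      obtain ⟨ih1, ih2⟩ := ih hp.2
      constructor
      · intro hj
        simp only [List.mem_cons, not_or] at hj
        have : (Pi.single j 1 : Fin n → ℕ) a = 0 := by
          rw [Pi.single_apply, if_neg (Ne.symm hj.1)]
        rw [List.foldr_cons, List.foldr_cons, ih1 hj.2, Pi.add_apply, this, add_zero]
      · intro hj
        by_cases e : a = j
        · subst e
          have hnot : a ∉ l := fun h => lt_irrefl _ (hp.1 a h)
          rw [List.foldr_cons, List.foldr_cons, ih1 hnot, Pi.add_apply, Pi.single_eq_same,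
            Function.iterate_succ_apply']
        · have hjl : j ∈ l := by
            rcases List.mem_cons.1 hj with h | h
            · exact absurd h.symm e
            · exact h
          have hlt := hp.1 j hjl
          have : (Pi.single j 1 : Fin n → ℕ) a = 0 := by
            rw [Pi.single_apply, if_neg e]
          rw [List.foldr_cons, List.foldr_cons, ih2 hjl, Pi.add_apply, this, hβ a hlt]
          rfl
  exact (key _ (List.pairwise_lt_finRange n)).2 (List.mem_finRange j)

theorem multi_induct {n : ℕ} (P : (Fin n → ℕ) → Prop) (h0 : P 0)
    (hs : ∀ β j, (∀ i < j, β i = 0) → P β → P (β + Pi.single j 1)) (β : Fin n → ℕ) : P β := by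
  induction hN : ∑ j, β j generalizing β with
  | zero =>
    have : β = 0 := by
      ext j
      simp only [Finset.sum_eq_zero_iff, Finset.mem_univ, true_imp_iff] at hN
      exact hN j
    rw [this]; exact h0
  | succ N ih =>
    have hex : ∃ j, β j ≠ 0 := by
      by_contra! h
      simp [h] at hN
    have hne : (Finset.univ.filter (fun j => β j ≠ 0)).Nonempty := by
      obtain ⟨j, hj⟩ := hex
      exact ⟨j, by simp [hj]⟩
    obtain ⟨j, hj, hmin⟩ := Finset.exists_min_image _ id hne
    simp only [Finset.mem_filter, Finset.mem_univ, true_and, id] at hj hmin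
    have hlt : ∀ i < j, β i = 0 := by
      intro i hi
      by_contra h
      exact absurd (hmin i h) (not_le.2 hi)
    have hdec : β = (β - Pi.single j 1) + Pi.single j 1 := by
      ext i
      by_cases e : i = j
      · subst e; simp; omega
      · simp [e]
    rw [hdec]
    apply hs
    · intro i hi; simp [hlt i hi]
    · apply ih
      rw [hdec] at hN
      simp only [Pi.add_apply, Finset.sum_add_distrib, Finset.sum_pi_single', Finset.mem_univ, if_true] at hN
      have h1 : ∑ x, (Pi.single j 1 : Fin n → ℕ) x = 1 := by simp
      omega

theorem prod_update_zpow {n : ℕ} (w : Fin n → ℂ) (j : Fin n) (ζ : ℂ) (e : Fin n → ℤ) :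
    ∏ k, (Function.update w j ζ k) ^ e k = ζ ^ e j * ∏ k ∈ Finset.univ.erase j, w k ^ e k := by
  rw [← Finset.mul_prod_erase _ _ (Finset.mem_univ j)]
  congr 1
  · simp
  · apply Finset.prod_congr rfl
    intro k hk
    rw [Function.update_of_ne (Finset.ne_of_mem_erase hk)]

theorem prod_zpow_split {n : ℕ} (w : Fin n → ℂ) (j : Fin n) (e : Fin n → ℤ) :
    ∏ k, (w k) ^ e k = w j ^ e j * ∏ k ∈ Finset.univ.erase j, w k ^ e k :=
  (Finset.mul_prod_erase _ _ (Finset.mem_univ j)).symm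

/-- slice derivative -/
theorem slice_deriv {n : ℕ} (g : (Fin n → ℂ) → ℂ) (w : Fin n → ℂ) (j : Fin n)
    (hg : DifferentiableAt ℂ g w) :
    HasDerivAt (fun ζ => g (Function.update w j ζ)) (pderivC j g w) (w j) := by
  have h1 : HasDerivAt (fun ζ : ℂ => Function.update w j ζ) (Pi.single j 1) (w j) :=
    hasDerivAt_update w j (w j)
  have h2 : HasFDerivAt g (fderiv ℂ g w) (Function.update w j (w j)) := by
    rw [Function.update_eq_self]; exact hg.hasFDerivAt
  exact h2.comp_hasDerivAt (w j) h1

theorem termwise {n : ℕ} {I : Type*} (W : Set (Fin n → ℂ)) (hW : IsOpen W)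
    (hW0 : ∀ w ∈ W, ∀ j, w j ≠ 0)
    (a : I → ℂ) (e : I → Fin n → ℤ) (g : (Fin n → ℂ) → ℂ) (hg : DifferentiableOn ℂ g W)
    (hs : ∀ w ∈ W, HasSum (fun i => a i * ∏ k, w k ^ e i k) (g w)) (j : Fin n) :
    ∀ w ∈ W, HasSum (fun i => a i * (e i j : ℂ) * ∏ k, w k ^ (e i k - (Pi.single j 1 : Fin n → ℤ) k))
      (pderivC j g w) := by
  intro w hw
  have hwj := hW0 w hw j
  have hpre : IsOpen ((fun ζ : ℂ => Function.update w j ζ) ⁻¹' W) :=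
    hW.preimage (continuous_const.update j continuous_id)
  have hmem : w j ∈ ((fun ζ : ℂ => Function.update w j ζ) ⁻¹' W) := by
    simpa using hw
  obtain ⟨ε, hε, hball⟩ := Metric.isOpen_iff.1 hpre _ hmem
  -- choose δ
  have hpos : 0 < ‖w j‖ := norm_pos_iff.2 hwj
  obtain ⟨δ, hδ0, hδ1, hδ2⟩ : ∃ δ : ℝ, 0 < δ ∧ δ < 1 ∧ δ * ‖w j‖ < ε := by
    refine ⟨min (1/2) (ε / (2 * ‖w j‖)), by positivity, ?_, ?_⟩
    · exact (min_le_left _ _).trans_lt (by norm_num)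
    · calc _ ≤ ε / (2 * ‖w j‖) * ‖w j‖ := by gcongr; exact min_le_right _ _
        _ = ε / 2 := by field_simp
        _ < ε := by linarith
  set zp : ℂ := (1 + δ : ℝ) * w j with hzp
  set zm : ℂ := (1 - δ : ℝ) * w j with hzm
  have nzp : ‖zp‖ = (1 + δ) * ‖w j‖ := by
    rw [hzp, norm_mul, Complex.norm_real, Real.norm_of_nonneg (by linarith)]
  have nzm : ‖zm‖ = (1 - δ) * ‖w j‖ := by
    rw [hzm, norm_mul, Complex.norm_real, Real.norm_of_nonneg (by linarith)]
  have mzp : Function.update w j zp ∈ W := by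
    apply hball
    rw [Metric.mem_ball, dist_eq_norm]
    have : zp - w j = (δ : ℂ) * w j := by rw [hzp]; push_cast; ring
    rw [this, norm_mul, Complex.norm_real, Real.norm_of_nonneg hδ0.le]; exact hδ2
  have mzm : Function.update w j zm ∈ W := by
    apply hball
    rw [Metric.mem_ball, dist_eq_norm]
    have : zm - w j = -((δ : ℂ) * w j) := by rw [hzm]; push_cast; ring
    rw [this, norm_neg, norm_mul, Complex.norm_real, Real.norm_of_nonneg hδ0.le]; exact hδ2
  let U := Metric.ball (w j) (δ * ‖w j‖)
  let F : I → ℂ → ℂ := fun i ζ => a i * ∏ k, (Function.update w j ζ k) ^ e i k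
  have hFe : ∀ i ζ, F i ζ = a i * (ζ ^ e i j * ∏ k ∈ Finset.univ.erase j, w k ^ e i k) := by
    intro i ζ; simp only [F, prod_update_zpow]
  have hup : Summable (fun i => ‖F i zm‖ + ‖F i zp‖) :=
    ((hs _ mzm).summable.norm).add ((hs _ mzp).summable.norm)
  have hUne : ∀ ζ ∈ U, ‖zm‖ ≤ ‖ζ‖ ∧ ‖ζ‖ ≤ ‖zp‖ := by
    intro ζ hζ
    rw [Metric.mem_ball, dist_eq_norm] at hζ
    rw [nzm, nzp]
    have h1 := norm_sub_norm_le (w j) ζ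
    have h2 := norm_sub_norm_le ζ (w j)
    rw [norm_sub_rev] at h1
    constructor <;> linarith
  have hzm0 : 0 < ‖zm‖ := by rw [nzm]; exact mul_pos (by linarith) hpos
  have hUW : ∀ ζ ∈ U, Function.update w j ζ ∈ W := by
    intro ζ hζ
    exact hball (Metric.ball_subset_ball hδ2.le hζ)
  have hζ0 : ∀ ζ ∈ U, ζ ≠ 0 := fun ζ hζ => norm_pos_iff.1 (hzm0.trans_le (hUne ζ hζ).1)
  have hder : ∀ i, ∀ ζ ∈ U, HasDerivAt (F i)
      (a i * ((e i j : ℂ) * ζ ^ (e i j - 1) * ∏ k ∈ Finset.univ.erase j, w k ^ e i k)) ζ := by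
    intro i ζ hζ
    have : F i = fun ζ => a i * (ζ ^ e i j * ∏ k ∈ Finset.univ.erase j, w k ^ e i k) :=
      funext (hFe i)
    rw [this]
    exact ((hasDerivAt_zpow (e i j) ζ (Or.inl (hζ0 ζ hζ))).mul_const _).const_mul _
  have hbd : ∀ (i : I) (ζ : ℂ), ζ ∈ U → ‖F i ζ‖ ≤ ‖F i zm‖ + ‖F i zp‖ := by
    intro i ζ hζ
    obtain ⟨h1, h2⟩ := hUne ζ hζ
    rw [hFe, hFe, hFe]
    simp only [norm_mul, norm_zpow]
    set A := ‖a i‖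
    set B := ‖∏ k ∈ Finset.univ.erase j, w k ^ e i k‖
    have hA : 0 ≤ A := norm_nonneg _
    have hB : 0 ≤ B := norm_nonneg _
    have hz : ‖ζ‖ ^ e i j ≤ ‖zm‖ ^ e i j + ‖zp‖ ^ e i j := by
      have p1 : 0 ≤ ‖zm‖ ^ e i j := by positivity
      have p2 : 0 ≤ ‖zp‖ ^ e i j := by positivity
      rcases le_total 0 (e i j) with h | h
      · have := zpow_le_zpow_left₀ h (norm_nonneg ζ) h2
        linarith
      · have : ‖ζ‖ ^ e i j ≤ ‖zm‖ ^ e i j := by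
          have h3 := zpow_le_zpow_left₀ (neg_nonneg.2 h) hzm0.le h1
          rw [zpow_neg, zpow_neg] at h3
          exact (inv_le_inv₀ (by positivity) (zpow_pos (hzm0.trans_le h1) _)).1 h3
        linarith
    calc A * (‖ζ‖ ^ e i j * B) ≤ A * ((‖zm‖ ^ e i j + ‖zp‖ ^ e i j) * B) := by gcongr
      _ = _ := by ring
  have hU : w j ∈ U := Metric.mem_ball_self (by positivity)
  have H := Complex.hasSum_deriv_of_summable_norm hup
    (fun i ζ hζ => (hder i ζ hζ).differentiableAt.differentiableWithinAt) Metric.isOpen_ball hbd hU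
  have hd : deriv (fun ζ => ∑' i, F i ζ) (w j) = pderivC j g w := by
    have hsl := slice_deriv g w j (hg.differentiableAt (hW.mem_nhds hw))
    rw [← hsl.deriv]
    apply Filter.EventuallyEq.deriv_eq
    filter_upwards [Metric.isOpen_ball.mem_nhds hU] with ζ hζ
    exact (hs _ (hUW ζ hζ)).tsum_eq
  rw [hd] at H
  suffices hfun : (fun i => a i * (e i j : ℂ) *
      ∏ k, w k ^ (e i k - (Pi.single j 1 : Fin n → ℤ) k)) = (fun i => deriv (F i) (w j)) by
    rw [hfun]; exact H
  funext i
  rw [(hder i _ hU).deriv, prod_zpow_split w j]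
  simp only [Pi.single_eq_same]
  have : ∏ k ∈ Finset.univ.erase j, w k ^ (e i k - (Pi.single j 1 : Fin n → ℤ) k) =
      ∏ k ∈ Finset.univ.erase j, w k ^ e i k := by
    apply Finset.prod_congr rfl
    intro k hk
    rw [Pi.single_eq_of_ne (Finset.ne_of_mem_erase hk), sub_zero]
  rw [this]; ring

/-- falling factorial -/
noncomputable def fallP (l : ℤ) (b : ℕ) : ℂ := ∏ i ∈ Finset.range b, ((l : ℂ) - i)

theorem fallP_succ (l : ℤ) (b : ℕ) : fallP l (b + 1) = fallP l b * ((l : ℂ) - b) :=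
  Finset.prod_range_succ _ _

theorem hasSum_Dmulti {n : ℕ} {I : Type*} (W : Set (Fin n → ℂ)) (hW : IsOpen W)
    (hW0 : ∀ w ∈ W, ∀ j, w j ≠ 0)
    (a : I → ℂ) (e : I → Fin n → ℤ) (g : (Fin n → ℂ) → ℂ)
    (hg : ∀ β, DifferentiableOn ℂ (Dmulti β g) W)
    (hs : ∀ w ∈ W, HasSum (fun i => a i * ∏ k, w k ^ e i k) (g w)) (β : Fin n → ℕ) :
    ∀ w ∈ W, HasSum (fun i => (a i * ∏ k, fallP (e i k) (β k)) * ∏ k, w k ^ (e i k - (β k : ℤ)))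
      (Dmulti β g w) := by
  induction β using multi_induct with
  | h0 =>
    intro w hw
    rw [Dmulti_zero]
    simpa [fallP] using hs w hw
  | hs β j hβ ih =>
    intro w hw
    rw [Dmulti_step β j hβ]
    have := termwise W hW hW0 _ (fun i k => e i k - (β k : ℤ)) _ (hg β) ih j w hw
    suffices hfun : (fun i => (a i * ∏ k, fallP (e i k) ((β + Pi.single j 1 : Fin n → ℕ) k)) *
        ∏ k, w k ^ (e i k - (((β + Pi.single j 1 : Fin n → ℕ) k : ℕ) : ℤ))) =
        (fun i => (a i * ∏ k, fallP (e i k) (β k)) * ((e i j - (β j : ℤ) : ℤ) : ℂ) *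
          ∏ k, w k ^ (e i k - (β k : ℤ) - (Pi.single j 1 : Fin n → ℤ) k)) by
      rw [hfun]; exact this
    funext i
    have h1 : ∏ k, fallP (e i k) ((β + Pi.single j 1 : Fin n → ℕ) k) =
        (∏ k, fallP (e i k) (β k)) * ((e i j - (β j : ℤ) : ℤ) : ℂ) := by
      rw [← Finset.mul_prod_erase _ _ (Finset.mem_univ j),
        ← Finset.mul_prod_erase _ (fun k => fallP (e i k) (β k)) (Finset.mem_univ j)]
      have : ∏ k ∈ Finset.univ.erase j, fallP (e i k) ((β + Pi.single j 1 : Fin n → ℕ) k) =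
          ∏ k ∈ Finset.univ.erase j, fallP (e i k) (β k) := by
        apply Finset.prod_congr rfl
        intro k hk
        rw [Pi.add_apply, Pi.single_eq_of_ne (Finset.ne_of_mem_erase hk), add_zero]
      rw [this, Pi.add_apply, Pi.single_eq_same, fallP_succ]
      push_cast; ring
    have h2 : ∏ k, w k ^ (e i k - (((β + Pi.single j 1 : Fin n → ℕ) k : ℕ) : ℤ)) =
        ∏ k, w k ^ (e i k - (β k : ℤ) - (Pi.single j 1 : Fin n → ℤ) k) := by
      apply Finset.prod_congr rfl
      intro k _
      congr 1
      by_cases hk : k = j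
      · subst hk; simp; ring
      · simp [hk]
    rw [h1, h2]; ring

theorem analyticAt_zpow' (m : ℤ) (z : ℂ) (h : z ≠ 0 ∨ 0 ≤ m) :
    AnalyticAt ℂ (fun w : ℂ => w ^ m) z := by
  rcases m with m | m
  · simp only [Int.ofNat_eq_natCast, zpow_natCast]
    exact (analyticAt_id (𝕜 := ℂ) (z := z)).pow m
  · have hz : z ≠ 0 := by
      rcases h with h | h
      · exact h
      · exact absurd h (by simp)
    simp only [zpow_negSucc]
    exact ((analyticAt_id (𝕜 := ℂ) (z := z)).pow (m + 1)).inv (pow_ne_zero _ hz)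

theorem mono_analytic {n : ℕ} (U : Set (Fin n → ℂ)) (c : ℂ) (α : Fin n → ℤ)
    (hU : ∀ z ∈ U, ∀ j, z j ≠ 0 ∨ 0 ≤ α j) (β : Fin n → ℕ) :
    AnalyticOnNhd ℂ (Dmulti β (fun z => c * ∏ j, z j ^ α j)) U := by
  induction β using multi_induct with
  | h0 =>
    rw [Dmulti_zero]
    intro z hz
    apply analyticAt_const.mul
    apply Finset.analyticAt_fun_prod
    intro j _
    exact AnalyticAt.comp' (g := fun w : ℂ => w ^ α j) (f := fun z : Fin n → ℂ => z j)
      (analyticAt_zpow' (α j) (z j) (hU z hz j))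
      ((ContinuousLinearMap.proj (R := ℂ) (φ := fun _ : Fin n => ℂ) j).analyticAt z)
  | hs β j hβ ih =>
    rw [Dmulti_step β j hβ]
    intro z hz
    exact ((ContinuousLinearMap.apply ℂ ℂ (Pi.single j 1 : Fin n → ℂ)).analyticAt _).comp
      (ih z hz).fderiv

theorem isOpen_nonzero (n : ℕ) : IsOpen {z : Fin n → ℂ | ∀ j, z j ≠ 0} := by
  simp only [Set.ofPred_forall]
  exact isOpen_iInter_of_finite fun j => isOpen_ne_fun (continuous_apply j) continuous_const

theorem mono_formula {n : ℕ} (c : ℂ) (α : Fin n → ℤ) (β : Fin n → ℕ) (z : Fin n → ℂ)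
    (hz : ∀ j, z j ≠ 0) :
    Dmulti β (fun z => c * ∏ j, z j ^ α j) z =
      (c * ∏ k, fallP (α k) (β k)) * ∏ k, z k ^ (α k - (β k : ℤ)) := by
  have := hasSum_Dmulti {z : Fin n → ℂ | ∀ j, z j ≠ 0} (isOpen_nonzero n) (fun w hw => hw)
    (fun _ : Unit => c) (fun _ => α) (fun z => c * ∏ j, z j ^ α j)
    (fun β => (mono_analytic {z : Fin n → ℂ | ∀ j, z j ≠ 0} c α (fun z hz j => Or.inl (hz j)) β).differentiableOn)
    (fun w _ => hasSum_unique _) β z hz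
  exact this.unique (hasSum_unique _)

theorem mu_nonneg' (l : ℤ) : 0 ≤ mu l := by
  unfold mu
  split_ifs with h
  · norm_num
  · push Not at h
    have : 0 < l * (l - 1) := by
      rcases lt_or_gt_of_ne h.1 with h1 | h1
      · nlinarith
      · have : 2 ≤ l := by omega
        nlinarith
    have : (0:ℝ) < (l:ℝ) * ((l:ℝ) - 1) := by exact_mod_cast this
    positivity

theorem summable_mu : Summable mu := by
  have h1 : Summable (fun l : ℤ => 4 * (1 / (l : ℝ) ^ 2)) :=
    (Real.summable_one_div_int_pow.2 (by norm_num)).mul_left 4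
  have h2 : Summable (fun l : ℤ => if l = 0 ∨ l = 1 then (1:ℝ) else 0) := by
    apply summable_of_ne_finset_zero (s := {0, 1})
    intro l hl
    simp at hl
    simp [hl]
  refine Summable.of_nonneg_of_le mu_nonneg' (fun l => ?_) (h1.add h2)
  unfold mu
  split_ifs with h
  · have : (0:ℝ) ≤ 4 * (1 / (l : ℝ) ^ 2) := by positivity
    linarith
  · push Not at h
    have h0 : 0 < l * (l - 1) ∧ l * l ≤ 4 * (l * (l - 1)) ∧ 0 < l * l := by
      rcases lt_or_gt_of_ne h.1 with h1 | h1
      · refine ⟨?_, ?_, ?_⟩ <;> nlinarith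
      · have : 2 ≤ l := by omega
        refine ⟨?_, ?_, ?_⟩ <;> nlinarith
    have a1 : (0:ℝ) < (l:ℝ) * ((l:ℝ) - 1) := by exact_mod_cast h0.1
    have a2 : (l:ℝ) * l ≤ 4 * ((l:ℝ) * ((l:ℝ) - 1)) := by exact_mod_cast h0.2.1
    have a3 : (0:ℝ) < (l:ℝ) * l := by exact_mod_cast h0.2.2
    rw [add_zero, pow_two, mul_one_div, div_le_div_iff₀ a1 a3]
    linarith

theorem summable_prod_pi {n : ℕ} (g : Fin n → ℤ → ℝ) (h0 : ∀ j l, 0 ≤ g j l)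
    (hg : ∀ j, Summable (g j)) : Summable (fun α : Fin n → ℤ => ∏ j, g j (α j)) := by
  classical
  refine summable_of_sum_le (c := ∏ j, ∑' l, g j l)
    (fun α => Finset.prod_nonneg fun j _ => h0 j _) (fun s => ?_)
  calc ∑ α ∈ s, ∏ j, g j (α j)
      ≤ ∑ α ∈ Fintype.piFinset (fun j => s.image (fun α => α j)), ∏ j, g j (α j) := by
        apply Finset.sum_le_sum_of_subset_of_nonneg
        · intro α hα
          rw [Fintype.mem_piFinset]
          intro j
          exact Finset.mem_image_of_mem (fun α : Fin n → ℤ => α j) hα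
        · intro α _ _
          exact Finset.prod_nonneg fun j _ => h0 j _
    _ = ∏ j, ∑ l ∈ s.image (fun α => α j), g j l := (Finset.prod_univ_sum _ _).symm
    _ ≤ ∏ j, ∑' l, g j l := by
        apply Finset.prod_le_prod
        · intro j _; exact Finset.sum_nonneg fun l _ => h0 j l
        · intro j _; exact (hg j).sum_le_tsum _ (fun l _ => h0 j l)

theorem AInf_bdd {n : ℕ} {Ω : Set (Fin n → ℂ)} (hbd : Bornology.IsBounded Ω)
    {f : (Fin n → ℂ) → ℂ} (hf : AInfinity Ω f) (β : Fin n → ℕ) :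
    ∃ M : ℝ, 0 ≤ M ∧ ∀ z ∈ Ω, ‖Dmulti β f z‖ ≤ M := by
  obtain ⟨g, hg, he⟩ := (hf.2 β).2
  obtain ⟨M, hM⟩ := hbd.isCompact_closure.exists_bound_of_continuousOn hg
  refine ⟨max M 0, le_max_right _ _, fun z hz => ?_⟩
  rw [he hz]
  exact (hM z (subset_closure hz)).trans (le_max_left _ _)

theorem coeff_bd {n : ℕ} {Ω : Set (Fin n → ℂ)} (hopen : IsOpen Ω)
    (hRein : IsReinhardt Ω) {f : (Fin n → ℂ) → ℂ} (hf : AInfinity Ω f)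
    {c : (Fin n → ℤ) → ℂ}
    (hc : ∀ z ∈ Ω, HasSum (fun α : Fin n → ℤ => c α * ∏ j, z j ^ α j) (f z))
    (β : Fin n → ℕ) (M : ℝ) (hM0 : 0 ≤ M) (hM : ∀ z ∈ Ω, ‖Dmulti β f z‖ ≤ M)
    (α : Fin n → ℤ) (z : Fin n → ℂ) (hz : z ∈ Ω) (hz0 : ∀ j, z j ≠ 0) :
    ‖(c α * ∏ k, fallP (α k) (β k)) * ∏ k, z k ^ (α k - (β k : ℤ))‖ ≤ M := by
  have HS := hasSum_Dmulti (Ω ∩ {z : Fin n → ℂ | ∀ j, z j ≠ 0}) (hopen.inter (isOpen_nonzero n))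
    (fun w hw => hw.2) c (fun α => α) f (fun β => ((hf.2 β).1).mono Set.inter_subset_left)
    (fun w hw => hc w hw.1) β
  refine four_bd (fun α => (c α * ∏ k, fallP (α k) (β k)) * ∏ k, z k ^ (α k - (β k : ℤ)))
    (HS z ⟨hz, hz0⟩).summable M hM0 (fun x => ?_) α
  let lam : Fin n → ℂ := fun j => (AddCircle.toCircle (x j) : ℂ)
  have hlam : ∀ j, ‖lam j‖ = 1 := fun j => Circle.norm_coe _
  have hlam0 : ∀ j, lam j ≠ 0 := fun j => Circle.coe_ne_zero _
  have hmem := hRein z hz lam hlam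
  have H := HS _ ⟨hmem, fun j => mul_ne_zero (hlam0 j) (hz0 j)⟩
  have H2 := H.mul_left (∏ k, lam k ^ (β k : ℤ))
  have hfour : ∀ α, UnitAddTorus.mFourier α x = ∏ k, lam k ^ α k := by
    intro α
    simp only [UnitAddTorus.mFourier, ContinuousMap.coe_mk, fourier_apply, AddCircle.toCircle_zsmul,
      Circle.coe_zpow, lam]
  have hterm : (fun α => (c α * ∏ k, fallP (α k) (β k)) * (∏ k, z k ^ (α k - (β k : ℤ))) *
      UnitAddTorus.mFourier α x) = (fun α => (∏ k, lam k ^ (β k : ℤ)) *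
        ((c α * ∏ k, fallP (α k) (β k)) * ∏ k, (lam k * z k) ^ (α k - (β k : ℤ)))) := by
    funext α
    rw [hfour]
    have : ∏ k, (lam k * z k) ^ (α k - (β k : ℤ)) =
        (∏ k, lam k ^ (α k - (β k : ℤ))) * ∏ k, z k ^ (α k - (β k : ℤ)) := by
      rw [← Finset.prod_mul_distrib]
      exact Finset.prod_congr rfl fun k _ => mul_zpow _ _ _
    have h2 : ∏ k, lam k ^ α k = (∏ k, lam k ^ (β k : ℤ)) * ∏ k, lam k ^ (α k - (β k : ℤ)) := by
      rw [← Finset.prod_mul_distrib]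
      refine Finset.prod_congr rfl fun k _ => ?_
      rw [← zpow_add₀ (hlam0 k)]; congr 1; ring
    rw [this, h2]; ring
  rw [hterm, H2.tsum_eq, norm_mul, norm_prod]
  simp only [norm_zpow, hlam, one_zpow, Finset.prod_const_one, one_mul]
  exact hM _ hmem

theorem coeff_zero {n : ℕ} {Ω : Set (Fin n → ℂ)} (hopen : IsOpen Ω) (α : Fin n → ℤ) (C : ℂ) (M : ℝ)
    (hM0 : 0 ≤ M) (hM : ∀ z ∈ Ω, (∀ j, z j ≠ 0) → ‖C * ∏ k, z k ^ α k‖ ≤ M)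
    (w : Fin n → ℂ) (hw : w ∈ Ω) (j : Fin n) (hwj : w j = 0) (hα : α j < 0) : C = 0 := by
  classical
  by_contra hC
  obtain ⟨ε, hε, hball⟩ := Metric.isOpen_iff.1 hopen w hw
  let v : Fin n → ℂ := fun i => if w i = 0 then ((ε / 2 : ℝ) : ℂ) else w i
  have hv0 : ∀ i, v i ≠ 0 := by
    intro i
    simp only [v]
    split_ifs with h
    · exact Complex.ofReal_ne_zero.2 (by positivity)
    · exact h
  set K := ‖∏ k ∈ Finset.univ.erase j, v k ^ α k‖ with hK
  have hKpos : 0 < K := norm_pos_iff.2 (Finset.prod_ne_zero_iff.2 fun k _ => zpow_ne_zero _ (hv0 k))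
  have hCpos : 0 < ‖C‖ := norm_pos_iff.2 hC
  have key : ∀ t : ℝ, 0 < t → t ≤ 1 → t ≤ ε / 2 → ‖C‖ * K ≤ M * t := by
    intro t ht0 ht1 htε
    have hmem : Function.update v j (t : ℂ) ∈ Ω := by
      apply hball
      rw [Metric.mem_ball]
      refine lt_of_le_of_lt ?_ (half_lt_self hε)
      rw [dist_pi_le_iff (by positivity)]
      intro i
      by_cases hi : i = j
      · subst hi
        rw [Function.update_self, hwj, dist_zero_right, Complex.norm_real,
          Real.norm_of_nonneg ht0.le]
        exact htε
      · rw [Function.update_of_ne hi]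
        simp only [v]
        split_ifs with h
        · rw [h, dist_zero_right, Complex.norm_real, Real.norm_of_nonneg (by positivity)]
        · rw [dist_self]; positivity
    have hne : ∀ i, Function.update v j (t : ℂ) i ≠ 0 := by
      intro i
      by_cases hi : i = j
      · subst hi
        rw [Function.update_self]; exact Complex.ofReal_ne_zero.2 ht0.ne'
      · rw [Function.update_of_ne hi]; exact hv0 i
    have hb := hM _ hmem hne
    rw [prod_update_zpow, norm_mul, norm_mul, norm_zpow, Complex.norm_real,
      Real.norm_of_nonneg ht0.le, ← hK] at hb
    have hz : t⁻¹ ≤ t ^ α j := by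
      rw [← zpow_neg_one]
      exact zpow_le_zpow_right_of_le_one₀ ht0 ht1 (by omega)
    have : ‖C‖ * (t⁻¹ * K) ≤ M := le_trans (by gcongr) hb
    calc ‖C‖ * K = ‖C‖ * (t⁻¹ * K) * t := by field_simp
      _ ≤ M * t := by gcongr
  have hD : 0 < ‖C‖ * K := mul_pos hCpos hKpos
  set D := ‖C‖ * K
  let t := min (min 1 (ε / 2)) (D / (2 * (M + 1)))
  have ht : 0 < t := by positivity
  have h1 := key t ht ((min_le_left _ _).trans (min_le_left _ _))
    ((min_le_left _ _).trans (min_le_right _ _))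
  have h2 : t * (2 * (M + 1)) ≤ D := by
    have : t ≤ D / (2 * (M + 1)) := min_le_right _ _
    rwa [le_div_iff₀ (by positivity)] at this
  nlinarith

theorem decay_factor (l : ℤ) (b : ℕ) (z : ℂ) (hz : z ≠ 0) (R : ℝ) (hR : 1 ≤ R) (hzR : ‖z‖ ≤ R)
    (s : Bool) (hs : s = decide (¬ (l - (b : ℤ) = 0 ∨ l - (b : ℤ) = 1))) :
    ‖fallP l b * z ^ (l - (b : ℤ))‖ ≤
      ‖fallP l (b + if s then 2 else 0) * z ^ (l - ((b + if s then 2 else 0 : ℕ) : ℤ))‖ *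
        (R ^ 2 * mu (l - b)) := by
  by_cases h : l - (b : ℤ) = 0 ∨ l - (b : ℤ) = 1
  · have hs' : s = false := by rw [hs]; simp [h]
    subst hs'
    have hm : mu (l - b) = 1 := by unfold mu; rw [if_pos h]
    rw [hm]
    simp only [Bool.false_eq_true, if_false, add_zero, mul_one]
    have : (1:ℝ) ≤ R ^ 2 := one_le_pow₀ hR
    exact le_mul_of_one_le_right (norm_nonneg _) this
  · have hs' : s = true := by rw [hs]; simp only [h, not_false_eq_true, decide_true]
    subst hs'
    have hm0 := mu_nonneg' (l - b)
    have hm : ((mu (l - b) : ℝ) : ℂ) * (((l : ℂ) - b) * ((l : ℂ) - (b + 1 : ℕ))) = 1 := by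
      unfold mu; rw [if_neg h]
      push Not at h
      have e1 : ((l : ℂ) - b) ≠ 0 := by
        have := h.1
        exact_mod_cast this
      have e2 : ((l : ℂ) - b - 1) ≠ 0 := by
        have : l - (b : ℤ) - 1 ≠ 0 := by omega
        exact_mod_cast this
      push_cast
      rw [show (l : ℂ) - (b + 1) = l - b - 1 by ring]
      exact one_div_mul_cancel (mul_ne_zero e1 e2)
    have hid : fallP l b * z ^ (l - (b : ℤ)) =
        (fallP l (b + 2) * z ^ (l - ((b + 2 : ℕ) : ℤ))) * (z ^ 2 * ((mu (l - b) : ℝ) : ℂ)) := by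
      rw [show b + 2 = (b + 1) + 1 from rfl, fallP_succ, fallP_succ]
      have : z ^ (l - (b : ℤ)) = z ^ (l - ((b + 1 + 1 : ℕ) : ℤ)) * z ^ 2 := by
        rw [← zpow_natCast z 2, ← zpow_add₀ hz]
        congr 1; push_cast; ring
      rw [this]
      linear_combination (-(fallP l b * z ^ (l - ((b + 1 + 1 : ℕ) : ℤ)) * z ^ 2)) * hm
    rw [hid, norm_mul]
    simp only [if_true]
    gcongr
    rw [norm_mul, norm_pow, Complex.norm_real, Real.norm_of_nonneg hm0]
    gcongr

theorem stmt9_aux {n : ℕ} (Ω : Set (Fin n → ℂ)) (hopen : IsOpen Ω)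
    (hbd : Bornology.IsBounded Ω) (hRein : IsReinhardt Ω)
    (f : (Fin n → ℂ) → ℂ) (hf : AInfinity Ω f)
    (c : (Fin n → ℤ) → ℂ)
    (hc : ∀ z ∈ Ω, HasSum (fun α : Fin n → ℤ => c α * ∏ j, z j ^ α j) (f z))
    (k : ℕ) :
    Summable fun α : Fin n → ℤ => snormMax k Ω (fun z => c α * ∏ j, z j ^ α j) := by
  classical
  choose M hM0 hM using AInf_bdd hbd hf
  obtain ⟨R, hR1, hR⟩ : ∃ R : ℝ, 1 ≤ R ∧ ∀ z ∈ Ω, ∀ j, ‖z j‖ ≤ R := by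
    obtain ⟨R, hR⟩ := hbd.exists_norm_le
    exact ⟨max R 1, le_max_right _ _, fun z hz j =>
      (norm_le_pi_norm z j).trans ((hR z hz).trans (le_max_left _ _))⟩
  let C : (Fin n → ℕ) → ℝ := fun β =>
    ∑ s : Fin n → Bool, M (fun k => β k + if s k then 2 else 0)
  have hC0 : ∀ β, 0 ≤ C β := fun β => Finset.sum_nonneg fun s _ => hM0 _
  let B : (Fin n → ℕ) → (Fin n → ℤ) → ℝ := fun β α => C β * ∏ k, (R ^ 2 * mu (α k - β k))
  have hB0 : ∀ β α, 0 ≤ B β α := fun β α => mul_nonneg (hC0 β)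
    (Finset.prod_nonneg fun k _ => mul_nonneg (by positivity) (mu_nonneg' _))
  -- bound on the nonzero part
  have hstar : ∀ β α, ∀ z ∈ Ω, (∀ j, z j ≠ 0) →
      ‖Dmulti β (fun z => c α * ∏ j, z j ^ α j) z‖ ≤ B β α := by
    intro β α z hz hz0
    rw [mono_formula _ _ _ _ hz0]
    let s : Fin n → Bool := fun k => decide (¬ (α k - (β k : ℤ) = 0 ∨ α k - (β k : ℤ) = 1))
    let β' : Fin n → ℕ := fun k => β k + if s k then 2 else 0
    have h1 := coeff_bd hopen hRein hf hc β' (M β') (hM0 β') (hM β') α z hz hz0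
    have h2 : M β' ≤ C β :=
      Finset.single_le_sum (f := fun s : Fin n → Bool => M (fun k => β k + if s k then 2 else 0))
        (fun s _ => hM0 _) (Finset.mem_univ s)
    rw [mul_assoc, ← Finset.prod_mul_distrib, norm_mul, norm_prod] at h1 ⊢
    calc ‖c α‖ * ∏ k, ‖fallP (α k) (β k) * z k ^ (α k - (β k : ℤ))‖
        ≤ ‖c α‖ * ∏ k, (‖fallP (α k) (β' k) * z k ^ (α k - (β' k : ℤ))‖ *
            (R ^ 2 * mu (α k - β k))) := by
          gcongr with k _
          exact decay_factor (α k) (β k) (z k) (hz0 k) R hR1 (hR z hz k) (s k) rfl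
      _ = (‖c α‖ * ∏ k, ‖fallP (α k) (β' k) * z k ^ (α k - (β' k : ℤ))‖) *
            ∏ k, (R ^ 2 * mu (α k - β k)) := by
          rw [Finset.prod_mul_distrib, mul_assoc]
      _ ≤ C β * ∏ k, (R ^ 2 * mu (α k - β k)) := by
          apply mul_le_mul_of_nonneg_right (h1.trans h2)
          exact Finset.prod_nonneg fun k _ => mul_nonneg (by positivity) (mu_nonneg' _)
  have hdense : Dense {z : Fin n → ℂ | ∀ j, z j ≠ 0} := by
    have : {z : Fin n → ℂ | ∀ j, z j ≠ 0} = Set.univ.pi (fun _ => ({0}ᶜ : Set ℂ)) := by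
      ext z; simp
    rw [this]
    exact dense_pi _ fun j _ => dense_compl_singleton 0
  have hall : ∀ β α, ∀ z ∈ Ω, ‖Dmulti β (fun z => c α * ∏ j, z j ^ α j) z‖ ≤ B β α := by
    intro β α z hz
    have han : AnalyticOnNhd ℂ (Dmulti β (fun z => c α * ∏ j, z j ^ α j)) Ω := by
      by_cases hca : c α = 0
      · have e : (fun z : Fin n → ℂ => c α * ∏ j, z j ^ α j) =
            (fun z : Fin n → ℂ => (0 : ℂ) * ∏ j, z j ^ (0 : Fin n → ℤ) j) := by
          funext z; simp [hca]
        rw [e]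
        exact mono_analytic Ω 0 0 (fun z _ j => Or.inr le_rfl) β
      · refine mono_analytic Ω (c α) α (fun w hw j => ?_) β
        by_contra! hcon
        refine hca (coeff_zero hopen α (c α) (B 0 α) (hB0 0 α) (fun z hz hz0 => ?_) w hw j hcon.1
          hcon.2)
        have := hstar 0 α z hz hz0
        rwa [Dmulti_zero] at this
    have hcl : z ∈ closure (Ω ∩ {z : Fin n → ℂ | ∀ j, z j ≠ 0}) :=
      hdense.open_subset_closure_inter hopen hz
    have hcont : ContinuousAt (fun z => ‖Dmulti β (fun z => c α * ∏ j, z j ^ α j) z‖) z :=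
      (han z hz).continuousAt.norm
    haveI := mem_closure_iff_nhdsWithin_neBot.1 hcl
    refine le_of_tendsto (hcont.tendsto.mono_left nhdsWithin_le_nhds :
      Tendsto _ (𝓝[Ω ∩ {z : Fin n → ℂ | ∀ j, z j ≠ 0}] z) _) ?_
    filter_upwards [self_mem_nhdsWithin] with y hy
    exact hstar β α y hy.1 hy.2
  have hsumB : ∀ β, Summable (B β) := by
    intro β
    apply Summable.mul_left
    apply summable_prod_pi (fun k l => R ^ 2 * mu (l - β k))
    · intro j l; exact mul_nonneg (by positivity) (mu_nonneg' _)
    · intro j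
      apply Summable.mul_left
      exact summable_mu.comp_injective (sub_left_injective (b := (β j : ℤ)))
  let S : Finset (Fin n → ℕ) := Fintype.piFinset fun _ => Finset.range (k + 1)
  have hsum : Summable (fun α => ∑ β ∈ S, B β α) := summable_sum fun β _ => hsumB β
  refine Summable.of_nonneg_of_le (fun α => ?_) (fun α => ?_) hsum
  · apply Real.sSup_nonneg
    rintro x ⟨β, z, _, _, rfl⟩
    exact norm_nonneg _
  · apply Real.sSup_le
    · rintro x ⟨β, z, hz, hβ, rfl⟩
      refine (hall β α z hz).trans ?_
      refine Finset.single_le_sum (f := fun β => B β α) (fun β _ => hB0 β α) ?_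
      rw [Fintype.mem_piFinset]
      intro j
      rw [Finset.mem_range]
      have := hβ j
      omega
    · exact Finset.sum_nonneg fun β _ => hB0 β α

/-- Absolute convergence of the Laurent series in `A^∞` of a bounded Reinhardt domain:
for every `k`, `∑_{α ∈ ℤⁿ} ‖c_α e_α‖'_{k,Ω} < ∞`. -/
theorem stmt9 {n : ℕ} (Ω : Set (Fin n → ℂ)) (hopen : IsOpen Ω) (hconn : IsConnected Ω)
    (hbd : Bornology.IsBounded Ω) (hRein : IsReinhardt Ω)
    (f : (Fin n → ℂ) → ℂ) (hf : AInfinity Ω f)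
    (c : (Fin n → ℤ) → ℂ)
    (hc : ∀ z ∈ Ω, HasSum (fun α : Fin n → ℤ => c α * ∏ j, z j ^ α j) (f z))
    (k : ℕ) :
    Summable fun α : Fin n → ℤ => snormMax k Ω (fun z => c α * ∏ j, z j ^ α j) := by
  exact stmt9_aux Ω hopen hbd hRein f hf c hc k
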